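/- Let a, b, c be pairwise coprime positive integers with c² = a² + b² + ab, and let m be a positive integer such that the triangle with side lengths (a·(a+2b)·m, b·(b+2a)·m, c²·m) tiles into (a+2b)·(b+2a)·m² congruent copies of the triangle with side lengths (a, b, c). Then the triangle with side lengths (c²·m, (a+2b)·c·m, 3·(a+b)·b·m) tiles into 3·m²·(a+2b)·(a+b) congruent copies of the triangle with side lengths (a, b, c). -/

import Mathlib

noncomputable section

abbrev Plane := EuclideanSpace ℝ (Fin 2)

/-- The point (x, y) in the Euclidean plane. -/
def pt (x y : ℝ) : Plane := (WithLp.equiv 2 (Fin 2 → ℝ)).symm ![x, y]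

/-- `Δ` is a triangle with side lengths `(p, q, r)`: the convex hull of points `P, Q, R`
with `dist Q R = p`, `dist P R = q`, `dist P Q = r`. -/
def IsTriangle (p q r : ℝ) (Δ : Set Plane) : Prop :=
  ∃ P Q R : Plane, dist Q R = p ∧ dist P R = q ∧ dist P Q = r ∧
    Δ = convexHull ℝ {P, Q, R}

/-- `S` tiles into `N` congruent copies of the `(p, q, r)` triangle: there are isometries
`f 1, …, f N` of the plane and a triangle `Δ` with side lengths `(p, q, r)` such that
`S` is the union of the `f i '' Δ` and their interiors are pairwise disjoint. -/
def TilesInto (S : Set Plane) (N : ℕ) (p q r : ℝ) : Prop :=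
  ∃ (f : Fin N → Plane ≃ᵢ Plane) (Δ : Set Plane),
    IsTriangle p q r Δ ∧
    S = ⋃ i, f i '' Δ ∧
    ∀ i j : Fin N, i ≠ j → interior (f i '' Δ) ∩ interior (f j '' Δ) = ∅

/-!
Put `k = (a + 2b)m`. A cevian of length `ka` splits the side `3(a + b)bm` of the big triangle into
`kb` and `b(b + 2a)m`: this is Stewart's theorem combined with `c² = a² + b² + ab`, which makes the
angle opposite `c` in the tile, and the angle between the cevian and the part `kb`, equal to `120°`.
The piece containing the part `kb` is the tile enlarged `k` times, so lines parallel to its sides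
cut it into `k²` tiles. The other piece has the sides of the given triangle, so it inherits a tiling
by congruence.

Degenerate triangles need no separate treatment: a linear functional that weakly separates two
regions of `ℝ × ℝ` gives one that weakly separates their images under any affine map to the plane,
and this already makes the interiors of the images disjoint.
-/

section Congruence

variable {V P : Type*} [NormedAddCommGroup V] [InnerProductSpace ℝ V] [FiniteDimensional ℝ V]

lemma exists_linearIsometry_apply_eq_of_norm_eq {E : Type*} [AddCommGroup E] [Module ℝ E]
    {f g : E →ₗ[ℝ] V} (h : ∀ x, ‖f x‖ = ‖g x‖) :
    ∃ L : V →ₗᵢ[ℝ] V, ∀ x, L (f x) = g x := by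
  obtain ⟨s, hs⟩ := f.rangeRestrict.exists_rightInverse_of_surjective f.range_rangeRestrict
  have hfs (y : LinearMap.range f) : f (s y) = y := congrArg Subtype.val (LinearMap.congr_fun hs y)
  let L : LinearMap.range f →ₗᵢ[ℝ] V :=
    { toLinearMap := g ∘ₗ s
      norm_map' := fun y => by
        rw [LinearMap.comp_apply, ← h, hfs, Submodule.coe_norm] }
  refine ⟨L.extend, fun x => ?_⟩
  have hker : ‖g (s (f.rangeRestrict x) - x)‖ = 0 := by
    rw [← h, map_sub, hfs, LinearMap.codRestrict_apply, sub_self, norm_zero]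
  rw [norm_eq_zero, map_sub, sub_eq_zero] at hker
  exact (L.extend_apply (f.rangeRestrict x)).trans hker

lemma exists_linearIsometry_apply_eq_of_inner_eq {ι : Type*} {v w : ι → V}
    (h : ∀ i j, inner ℝ (v i) (v j) = inner ℝ (w i) (w j)) :
    ∃ L : V →ₗᵢ[ℝ] V, ∀ i, L (v i) = w i := by
  have hnorm (x : ι →₀ ℝ) :
      ‖Finsupp.linearCombination ℝ v x‖ = ‖Finsupp.linearCombination ℝ w x‖ := by
    rw [← sq_eq_sq₀ (norm_nonneg _) (norm_nonneg _), ← real_inner_self_eq_norm_sq,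
      ← real_inner_self_eq_norm_sq]
    simp only [Finsupp.linearCombination_apply, Finsupp.sum_inner, Finsupp.inner_sum,
      inner_smul_left, inner_smul_right, h]
  obtain ⟨L, hL⟩ := exists_linearIsometry_apply_eq_of_norm_eq hnorm
  exact ⟨L, fun i => by simpa using hL (Finsupp.single i 1)⟩

variable [MetricSpace P] [NormedAddTorsor V P]

include V in
open scoped Congruent in
lemma exists_isometryEquiv_apply_eq_of_congruent {ι : Type*} {v w : ι → P} (h : v ≅ w) :
    ∃ f : P ≃ᵢ P, ∀ i, f (v i) = w i := by
  cases isEmpty_or_nonempty ι with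
  | inl _ => exact ⟨IsometryEquiv.refl P, isEmptyElim⟩
  | inr hι =>
    obtain ⟨i₀⟩ := hι
    have hinner (i j : ι) : inner ℝ (v i -ᵥ v i₀) (v j -ᵥ v i₀) =
        inner ℝ (w i -ᵥ w i₀) (w j -ᵥ w i₀) := by
      simp only [real_inner_eq_norm_mul_self_add_norm_mul_self_sub_norm_sub_mul_self_div_two,
        vsub_sub_vsub_cancel_right, ← dist_eq_norm_vsub, h.dist_eq]
    obtain ⟨L, hL⟩ := exists_linearIsometry_apply_eq_of_inner_eq hinner
    let e := L.toLinearIsometryEquiv rfl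
    refine ⟨(IsometryEquiv.vaddConst (v i₀)).symm.trans
      (e.toIsometryEquiv.trans (IsometryEquiv.vaddConst (w i₀))), fun i => ?_⟩
    have he : e (v i -ᵥ v i₀) = w i -ᵥ w i₀ := hL i
    simp [he]

end Congruence

section Separation

variable {E V : Type*} [AddCommGroup V] [Module ℝ V] [TopologicalSpace V]
  [IsTopologicalAddGroup V] [ContinuousSMul ℝ V]

lemma disjoint_interior_of_le_of_ge {f : V →ₗ[ℝ] ℝ} (hf : f ≠ 0) {t : ℝ} {S T : Set V}
    (hS : ∀ z ∈ S, f z ≤ t) (hT : ∀ z ∈ T, t ≤ f z) :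
    Disjoint (interior S) (interior T) := by
  have hopen : IsOpenMap f := f.isOpenMap_of_finiteDimensional (f.surjective hf)
  have hlt : interior S ⊆ f ⁻¹' Set.Iio t := by
    rw [← interior_Iic]
    exact (interior_mono (t := f ⁻¹' Set.Iic t) hS).trans
      hopen.interior_preimage_subset_preimage_interior
  have hgt : interior T ⊆ f ⁻¹' Set.Ioi t := by
    rw [← interior_Ici]
    exact (interior_mono (t := f ⁻¹' Set.Ici t) hT).trans
      hopen.interior_preimage_subset_preimage_interior
  have hdisj : Disjoint (Set.Iio t) (Set.Ioi t) := Set.Iio_disjoint_Ioi_same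
  exact (hdisj.preimage f).mono hlt hgt

variable [AddCommGroup E] [Module ℝ E]

lemma exists_eq_smul_of_ker_le_ker {f g : E →ₗ[ℝ] ℝ} (h : LinearMap.ker f ≤ LinearMap.ker g) :
    ∃ c : ℝ, g = c • f := by
  have := mem_span_of_iInf_ker_le_ker (ι := Unit) (L := fun _ => f) (K := g) (by simpa using h)
  rw [Set.range_const, Submodule.mem_span_singleton] at this
  obtain ⟨c, hc⟩ := this
  exact ⟨c, hc.symm⟩

/-- The separating functional on `V` is one that vanishes on the image of `ker ℓ`; it exists whether
or not `φ` is injective. -/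
lemma disjoint_interior_image_of_le_of_ge [FiniteDimensional ℝ E]
    (hdim : Module.finrank ℝ E ≤ Module.finrank ℝ V) (φ : E →ᵃ[ℝ] V) {ℓ : E →ₗ[ℝ] ℝ} (hℓ : ℓ ≠ 0)
    {t : ℝ} {A B : Set E} (hA : ∀ w ∈ A, ℓ w ≤ t) (hB : ∀ w ∈ B, t ≤ ℓ w) :
    Disjoint (interior (φ '' A)) (interior (φ '' B)) := by
  have hlt : (LinearMap.ker ℓ).map φ.linear < ⊤ := by
    refine Submodule.lt_top_of_finrank_lt_finrank ?_
    calc Module.finrank ℝ ((LinearMap.ker ℓ).map φ.linear)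
        ≤ Module.finrank ℝ (LinearMap.ker ℓ) := Submodule.finrank_map_le _ _
      _ < Module.finrank ℝ E := Submodule.finrank_lt (LinearMap.ker_eq_top.not.mpr hℓ)
      _ ≤ Module.finrank ℝ V := hdim
  obtain ⟨f, hf, hker⟩ := Submodule.exists_le_ker_of_lt_top _ hlt
  obtain ⟨c, hc⟩ : ∃ c : ℝ, f ∘ₗ φ.linear = c • ℓ :=
    exists_eq_smul_of_ker_le_ker (by rwa [LinearMap.ker_comp, ← Submodule.map_le_iff_le_comap])
  have hfφ (w : E) : f (φ w) = c * ℓ w + f (φ 0) := by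
    have hw : f (φ.linear w) = c * ℓ w := LinearMap.congr_fun hc w
    rw [← hw, ← map_add]
    exact congrArg f (congrFun φ.decomp w)
  rcases le_total 0 c with hc₀ | hc₀
  · refine disjoint_interior_of_le_of_ge (t := c * t + f (φ 0)) hf ?_ ?_ <;>
      rintro _ ⟨w, hw, rfl⟩ <;> rw [hfφ w]
    · exact add_le_add_left (mul_le_mul_of_nonneg_left (hA w hw) hc₀) _
    · exact add_le_add_left (mul_le_mul_of_nonneg_left (hB w hw) hc₀) _
  · refine (disjoint_interior_of_le_of_ge (t := c * t + f (φ 0)) hf ?_ ?_).symm <;>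
      rintro _ ⟨w, hw, rfl⟩ <;> rw [hfφ w]
    · exact add_le_add_left (mul_le_mul_of_nonpos_left (hB w hw) hc₀) _
    · exact add_le_add_left (mul_le_mul_of_nonpos_left (hA w hw) hc₀) _

end Separation

section Cevian

variable {V : Type*} [AddCommGroup V] [Module ℝ V]

lemma segment_union_segment_of_mem {P Q D : V} (hD : D ∈ segment ℝ P Q) :
    segment ℝ P D ∪ segment ℝ D Q = segment ℝ P Q := by
  rw [segment_eq_image_lineMap] at hD
  obtain ⟨t, ⟨ht₀, ht₁⟩, rfl⟩ := hD
  have himage (x y : ℝ) : segment ℝ (AffineMap.lineMap P Q x) (AffineMap.lineMap P Q y) =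
      AffineMap.lineMap P Q '' segment ℝ x y := (image_segment ℝ _ x y).symm
  have hP := himage 0 t
  have hQ := himage t 1
  have hPQ := himage 0 1
  rw [AffineMap.lineMap_apply_zero] at hP hPQ
  rw [AffineMap.lineMap_apply_one] at hQ hPQ
  rw [hP, hQ, hPQ, segment_eq_Icc ht₀, segment_eq_Icc ht₁, segment_eq_Icc zero_le_one,
    ← Set.image_union, Set.Icc_union_Icc_eq_Icc ht₀ ht₁]

lemma convexHull_union_convexHull_of_mem_segment {P Q D : V} (R : V) (hD : D ∈ segment ℝ P Q) :
    convexHull ℝ {R, P, D} ∪ convexHull ℝ {R, D, Q} = convexHull ℝ {R, P, Q} := by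
  simp only [← convexJoin_singleton_segment, ← convexJoin_union_right,
    segment_union_segment_of_mem hD]

/-- The affine map sending `(x, y)` to the point with coordinates `x`, `y` in the frame with origin
`O` and axis vectors `u`, `v`, which may be linearly dependent. -/
def frameMap (O u v : V) : ℝ × ℝ →ᵃ[ℝ] V :=
  ((LinearMap.toSpanSingleton ℝ V u).coprod (LinearMap.toSpanSingleton ℝ V v)).toAffineMap +
    AffineMap.const ℝ (ℝ × ℝ) O

lemma frameMap_apply (O u v : V) (x y : ℝ) : frameMap O u v (x, y) = x • u + y • v + O := by
  simp [frameMap]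

lemma frameMap_image_convexHull_triple (O u v : V) (A B C : ℝ × ℝ) :
    frameMap O u v '' convexHull ℝ {A, B, C} =
      convexHull ℝ {frameMap O u v A, frameMap O u v B, frameMap O u v C} := by
  rw [AffineMap.image_convexHull, Set.image_insert_eq, Set.image_pair]

lemma disjoint_interior_convexHull_of_mem_segment [TopologicalSpace V] [IsTopologicalAddGroup V]
    [ContinuousSMul ℝ V] (hV : 2 ≤ Module.finrank ℝ V) {P Q D : V} (R : V)
    (hD : D ∈ segment ℝ P Q) :
    Disjoint (interior (convexHull ℝ {R, P, D})) (interior (convexHull ℝ {R, D, Q})) := by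
  rw [segment_eq_image_lineMap] at hD
  obtain ⟨t, ⟨ht₀, ht₁⟩, hD⟩ := hD
  set φ := frameMap D (R - D) (Q - P)
  have hφR : φ (1, 0) = R := by rw [frameMap_apply]; module
  have hφD : φ (0, 0) = D := by rw [frameMap_apply]; module
  have hφP : φ (0, -t) = P := by
    rw [frameMap_apply, ← hD, AffineMap.lineMap_apply_module]; module
  have hφQ : φ (0, 1 - t) = Q := by
    rw [frameMap_apply, ← hD, AffineMap.lineMap_apply_module]; module
  rw [← hφR, ← hφP, ← hφQ, ← hφD, ← frameMap_image_convexHull_triple,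
    ← frameMap_image_convexHull_triple]
  have hle : convexHull ℝ {(1, 0), (0, -t), (0, 0)} ⊆ {w : ℝ × ℝ | w.2 ≤ 0} :=
    convexHull_min (by rintro _ (rfl | rfl | rfl) <;> simp [ht₀])
      (convex_halfSpace_le (LinearMap.snd ℝ ℝ ℝ).isLinear 0)
  have hge : convexHull ℝ {(1, 0), (0, 0), (0, 1 - t)} ⊆ {w : ℝ × ℝ | 0 ≤ w.2} :=
    convexHull_min (by rintro _ (rfl | rfl | rfl) <;> simp [ht₁])
      (convex_halfSpace_ge (LinearMap.snd ℝ ℝ ℝ).isLinear 0)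
  exact disjoint_interior_image_of_le_of_ge (by simpa using hV) φ (ℓ := LinearMap.snd ℝ ℝ ℝ)
    (fun h => one_ne_zero (LinearMap.congr_fun h (0, 1))) hle hge

end Cevian

section Grid

/-- The right isosceles triangle with right angle at `(x, y)` and signed leg length `s` along both
axes; for `s < 0` it is the point reflection of the one with leg `|s|`. -/
def cornerTriangle (x y s : ℝ) : Set (ℝ × ℝ) := convexHull ℝ {(x, y), (x + s, y), (x, y + s)}

lemma frameMap_image_cornerTriangle {V : Type*} [AddCommGroup V] [Module ℝ V]
    (O u v : V) (x y s : ℝ) : frameMap O u v '' cornerTriangle x y s =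
      convexHull ℝ {x • u + y • v + O, (x + s) • u + y • v + O, x • u + (y + s) • v + O} := by
  rw [cornerTriangle, frameMap_image_convexHull_triple]
  simp only [frameMap_apply]

lemma mem_cornerTriangle_iff {x y s : ℝ} (hs : s ≠ 0) {w : ℝ × ℝ} :
    w ∈ cornerTriangle x y s ↔
      0 ≤ (w.1 - x) / s ∧ 0 ≤ (w.2 - y) / s ∧ (w.1 - x) / s + (w.2 - y) / s ≤ 1 := by
  constructor
  · have hconvex : Convex ℝ {w : ℝ × ℝ |
        0 ≤ (w.1 - x) / s ∧ 0 ≤ (w.2 - y) / s ∧ (w.1 - x) / s + (w.2 - y) / s ≤ 1} := by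
      rintro z ⟨hz₁, hz₂, hz₃⟩ w ⟨hw₁, hw₂, hw₃⟩ p q hp hq hpq
      have hfst : (p * z.1 + q * w.1 - x) / s = p * ((z.1 - x) / s) + q * ((w.1 - x) / s) := by
        field_simp
        linear_combination x * hpq
      have hsnd : (p * z.2 + q * w.2 - y) / s = p * ((z.2 - y) / s) + q * ((w.2 - y) / s) := by
        field_simp
        linear_combination y * hpq
      simp only [Set.mem_ofPred_eq, Prod.fst_add, Prod.snd_add, Prod.smul_fst, Prod.smul_snd,
        smul_eq_mul, hfst, hsnd]
      exact ⟨by positivity, by positivity, by nlinarith⟩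
    refine fun hw => convexHull_min ?_ hconvex hw
    rintro _ (rfl | rfl | rfl) <;> simp [hs]
  · rintro ⟨h₁, h₂, h₃⟩
    refine mem_convexHull_of_exists_fintype
      ![1 - (w.1 - x) / s - (w.2 - y) / s, (w.1 - x) / s, (w.2 - y) / s]
      ![(x, y), (x + s, y), (x, y + s)] ?_ ?_ ?_ ?_
    · intro i
      fin_cases i
      exacts [by simpa using by linarith, h₁, h₂]
    · simp only [Fin.sum_univ_three, Matrix.cons_val]
      ring
    · simp [Fin.forall_fin_succ]
    · ext <;> simp [Fin.sum_univ_three] <;> field_simp <;> ring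

lemma mem_cornerTriangle_zero_iff {k : ℝ} (hk : 0 < k) {w : ℝ × ℝ} :
    w ∈ cornerTriangle 0 0 k ↔ 0 ≤ w.1 ∧ 0 ≤ w.2 ∧ w.1 + w.2 ≤ k := by
  rw [mem_cornerTriangle_iff hk.ne', ← add_div, div_le_one hk, le_div_iff₀ hk, le_div_iff₀ hk]
  simp

/-- The `k²` unit cells of the standard triangulation of `cornerTriangle 0 0 k` are indexed by pairs
`(p, q)` with `p, q < k`: inside the cell of `(p, q)`, `min p q` is the integer part of the first
coordinate and `max p q` that of the sum of the coordinates. These two numbers determine an upright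
cell, coded by `q ≤ p`, and, when they differ, an inverted one, coded by `p < q`. -/
def gridCell (p q : ℕ) : Set (ℝ × ℝ) :=
  if q ≤ p then cornerTriangle q (p - q) 1 else cornerTriangle (p + 1) (q - p) (-1)

lemma mem_gridCell_of_le_iff {p q : ℕ} (h : q ≤ p) {w : ℝ × ℝ} :
    w ∈ gridCell p q ↔ (q : ℝ) ≤ w.1 ∧ (p - q : ℝ) ≤ w.2 ∧ w.1 + w.2 ≤ p + 1 := by
  rw [gridCell, if_pos h, mem_cornerTriangle_iff one_ne_zero]
  grind

lemma mem_gridCell_of_lt_iff {p q : ℕ} (h : p < q) {w : ℝ × ℝ} :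
    w ∈ gridCell p q ↔ w.1 ≤ p + 1 ∧ w.2 ≤ (q - p : ℝ) ∧ (q : ℝ) ≤ w.1 + w.2 := by
  rw [gridCell, if_neg h.not_ge, mem_cornerTriangle_iff (neg_ne_zero.mpr one_ne_zero)]
  grind

lemma fst_mem_Icc_of_mem_gridCell {p q : ℕ} {w : ℝ × ℝ} (hw : w ∈ gridCell p q) :
    w.1 ∈ Set.Icc ((min p q : ℕ) : ℝ) ((min p q : ℕ) + 1) := by
  rcases le_or_gt q p with h | h
  · rw [mem_gridCell_of_le_iff h] at hw
    rw [min_eq_right h]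
    constructor <;> linarith
  · rw [mem_gridCell_of_lt_iff h] at hw
    rw [min_eq_left h.le]
    constructor <;> linarith

lemma add_mem_Icc_of_mem_gridCell {p q : ℕ} {w : ℝ × ℝ} (hw : w ∈ gridCell p q) :
    w.1 + w.2 ∈ Set.Icc ((max p q : ℕ) : ℝ) ((max p q : ℕ) + 1) := by
  rcases le_or_gt q p with h | h
  · rw [mem_gridCell_of_le_iff h] at hw
    rw [max_eq_left h]
    constructor <;> linarith
  · rw [mem_gridCell_of_lt_iff h] at hw
    rw [max_eq_right h.le]
    constructor <;> linarith

lemma gridCell_subset_cornerTriangle {k p q : ℕ} (hp : p < k) (hq : q < k) :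
    gridCell p q ⊆ cornerTriangle 0 0 k := by
  intro w hw
  have hk : (0 : ℝ) < k := Nat.cast_pos.mpr (p.zero_le.trans_lt hp)
  have hmin : (0 : ℝ) ≤ (min p q : ℕ) := Nat.cast_nonneg _
  have hmax : ((max p q : ℕ) : ℝ) + 1 ≤ k := mod_cast max_lt hp hq
  have hfst := (fst_mem_Icc_of_mem_gridCell hw).1
  have hadd := (add_mem_Icc_of_mem_gridCell hw).2
  refine (mem_cornerTriangle_zero_iff hk).mpr ⟨hmin.trans hfst, ?_, hadd.trans hmax⟩
  rcases le_or_gt q p with h | h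
  · have hqp : (q : ℝ) ≤ p := mod_cast h
    linarith [((mem_gridCell_of_le_iff h).mp hw).2.1]
  · have hpq : (p : ℝ) + 1 ≤ q := mod_cast h
    obtain ⟨h₁, -, h₃⟩ := (mem_gridCell_of_lt_iff h).mp hw
    linarith

lemma exists_nat_lt_mem_Icc {k : ℕ} (hk : 0 < k) {t : ℝ} (ht₀ : 0 ≤ t) (htk : t ≤ k) :
    ∃ n < k, t ∈ Set.Icc (n : ℝ) (n + 1) := by
  rcases htk.lt_or_eq with h | rfl
  · exact ⟨⌊t⌋₊, (Nat.floor_lt ht₀).mpr h, Nat.floor_le ht₀, (Nat.lt_floor_add_one t).le⟩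
  · refine ⟨k - 1, Nat.sub_lt hk one_pos, ?_⟩
    rw [Nat.cast_pred hk]
    constructor <;> linarith

lemma exists_mem_gridCell {k : ℕ} (hk : 0 < k) {w : ℝ × ℝ} (hw : w ∈ cornerTriangle 0 0 k) :
    ∃ p < k, ∃ q < k, w ∈ gridCell p q := by
  obtain ⟨h₁, h₂, h₃⟩ := (mem_cornerTriangle_zero_iff (Nat.cast_pos.mpr hk)).mp hw
  obtain ⟨s, hsk, hs⟩ := exists_nat_lt_mem_Icc hk (add_nonneg h₁ h₂) h₃
  obtain ⟨i, his, hi⟩ := exists_nat_lt_mem_Icc s.succ_pos h₁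
    (by push_cast; linarith [hs.2] : w.1 ≤ (s + 1 : ℕ))
  have his' : i ≤ s := Nat.lt_succ_iff.mp his
  by_cases hup : (s - i : ℝ) ≤ w.2
  · exact ⟨s, hsk, i, by lia, (mem_gridCell_of_le_iff his').mpr ⟨hi.1, hup, hs.2⟩⟩
  · have hne : i ≠ s := by
      rintro rfl
      exact hup (by simpa using h₂)
    exact ⟨i, by lia, s, hsk,
      (mem_gridCell_of_lt_iff (his'.lt_of_ne hne)).mpr ⟨hi.2, (not_le.mp hup).le, hs.1⟩⟩

lemma cornerTriangle_eq_iUnion_gridCell {k : ℕ} (hk : 0 < k) :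
    cornerTriangle 0 0 k = ⋃ i : Fin k × Fin k, gridCell i.1 i.2 := by
  ext w
  rw [Set.mem_iUnion]
  constructor
  · intro hw
    obtain ⟨p, hp, q, hq, hpq⟩ := exists_mem_gridCell hk hw
    exact ⟨(⟨p, hp⟩, ⟨q, hq⟩), hpq⟩
  · rintro ⟨i, hi⟩
    exact gridCell_subset_cornerTriangle i.1.isLt i.2.isLt hi

variable {V : Type*} [AddCommGroup V] [Module ℝ V] [TopologicalSpace V]
  [IsTopologicalAddGroup V] [ContinuousSMul ℝ V]

lemma disjoint_interior_image_of_Icc_nat (hV : 2 ≤ Module.finrank ℝ V) (φ : ℝ × ℝ →ᵃ[ℝ] V)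
    {ℓ : ℝ × ℝ →ₗ[ℝ] ℝ} (hℓ : ℓ ≠ 0) {A B : Set (ℝ × ℝ)} {m n : ℕ} (hmn : m ≠ n)
    (hA : ∀ w ∈ A, ℓ w ∈ Set.Icc (m : ℝ) (m + 1)) (hB : ∀ w ∈ B, ℓ w ∈ Set.Icc (n : ℝ) (n + 1)) :
    Disjoint (interior (φ '' A)) (interior (φ '' B)) := by
  have hdim : Module.finrank ℝ (ℝ × ℝ) ≤ Module.finrank ℝ V := by simpa using hV
  rcases hmn.lt_or_gt with h | h
  · have hle : (m + 1 : ℝ) ≤ n := mod_cast h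
    exact disjoint_interior_image_of_le_of_ge hdim φ hℓ (fun w hw => (hA w hw).2)
      (fun w hw => hle.trans (hB w hw).1)
  · have hle : (n + 1 : ℝ) ≤ m := mod_cast h
    exact (disjoint_interior_image_of_le_of_ge hdim φ hℓ (fun w hw => (hB w hw).2)
      (fun w hw => hle.trans (hA w hw).1)).symm

lemma disjoint_interior_image_gridCell_swap (hV : 2 ≤ Module.finrank ℝ V) (φ : ℝ × ℝ →ᵃ[ℝ] V)
    {p q : ℕ} (hpq : p < q) :
    Disjoint (interior (φ '' gridCell p q)) (interior (φ '' gridCell q p)) :=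
  disjoint_interior_image_of_le_of_ge (by simpa using hV) φ (ℓ := LinearMap.snd ℝ ℝ ℝ)
    (fun h => one_ne_zero (LinearMap.congr_fun h (0, 1)))
    (fun _ hw => ((mem_gridCell_of_lt_iff hpq).mp hw).2.1)
    (fun _ hw => ((mem_gridCell_of_le_iff hpq.le).mp hw).2.1)

lemma disjoint_interior_image_gridCell (hV : 2 ≤ Module.finrank ℝ V) (φ : ℝ × ℝ →ᵃ[ℝ] V)
    {p q p' q' : ℕ} (hne : (p, q) ≠ (p', q')) :
    Disjoint (interior (φ '' gridCell p q)) (interior (φ '' gridCell p' q')) := by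
  by_cases hmin : min p q = min p' q'
  · by_cases hmax : max p q = max p' q'
    · obtain ⟨rfl, rfl, hpq⟩ : p' = q ∧ q' = p ∧ p ≠ q := by grind
      rcases hpq.lt_or_gt with h | h
      · exact disjoint_interior_image_gridCell_swap hV φ h
      · exact (disjoint_interior_image_gridCell_swap hV φ h).symm
    · exact disjoint_interior_image_of_Icc_nat hV φ
        (ℓ := LinearMap.fst ℝ ℝ ℝ + LinearMap.snd ℝ ℝ ℝ)
        (fun h => by simpa using LinearMap.congr_fun h (0, 1)) hmax
        (fun _ => add_mem_Icc_of_mem_gridCell) (fun _ => add_mem_Icc_of_mem_gridCell)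
  · exact disjoint_interior_image_of_Icc_nat hV φ (ℓ := LinearMap.fst ℝ ℝ ℝ)
      (fun h => one_ne_zero (LinearMap.congr_fun h (1, 0))) hmin
      (fun _ => fst_mem_Icc_of_mem_gridCell) (fun _ => fst_mem_Icc_of_mem_gridCell)

end Grid

section Tilings

lemma isometryEquiv_image_convexHull {E F : Type*} [NormedAddCommGroup E] [NormedSpace ℝ E]
    [NormedAddCommGroup F] [NormedSpace ℝ F] (f : E ≃ᵢ F) (A : Set E) :
    f '' convexHull ℝ A = convexHull ℝ (f '' A) :=
  AffineMap.image_convexHull (f.toRealAffineIsometryEquiv.toAffineEquiv : E →ᵃ[ℝ] F) A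

variable {p q r : ℝ} {S S' Δ Δ' : Set Plane}

lemma IsTriangle.image (h : IsTriangle p q r Δ) (f : Plane ≃ᵢ Plane) :
    IsTriangle p q r (f '' Δ) := by
  obtain ⟨P, Q, R, hQR, hPR, hPQ, rfl⟩ := h
  refine ⟨f P, f Q, f R, ?_, ?_, ?_, ?_⟩
  · rwa [f.dist_eq]
  · rwa [f.dist_eq]
  · rwa [f.dist_eq]
  · rw [isometryEquiv_image_convexHull, Set.image_insert_eq, Set.image_pair]

lemma IsTriangle.exists_isometryEquiv_image_eq (h : IsTriangle p q r Δ)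
    (h' : IsTriangle p q r Δ') : ∃ f : Plane ≃ᵢ Plane, f '' Δ = Δ' := by
  obtain ⟨P, Q, R, hQR, hPR, hPQ, rfl⟩ := h
  obtain ⟨P', Q', R', hQR', hPR', hPQ', rfl⟩ := h'
  obtain ⟨f, hf⟩ := exists_isometryEquiv_apply_eq_of_congruent <|
    EuclideanGeometry.side_side_side (hPQ.trans hPQ'.symm) (hQR.trans hQR'.symm)
      (by rw [dist_comm R, dist_comm R', hPR, hPR'])
  have hfP : f P = P' := hf 0
  have hfQ : f Q = Q' := hf 1
  have hfR : f R = R' := hf 2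
  exact ⟨f, by rw [isometryEquiv_image_convexHull, Set.image_insert_eq, Set.image_pair,
    hfP, hfQ, hfR]⟩

lemma tilesInto_iUnion_of_isTriangle {ι : Type*} [Fintype ι] {T : ι → Set Plane}
    (hΔ : IsTriangle p q r Δ) (hT : ∀ i, IsTriangle p q r (T i))
    (hdisj : Pairwise fun i j => Disjoint (interior (T i)) (interior (T j))) :
    TilesInto (⋃ i, T i) (Fintype.card ι) p q r := by
  choose f hf using fun i => hΔ.exists_isometryEquiv_image_eq (hT i)
  let e := Fintype.equivFin ι
  refine ⟨fun n => f (e.symm n), Δ, hΔ, ?_, fun i j hij => ?_⟩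
  · simp only [hf]
    exact (e.symm.surjective.iUnion_comp T).symm
  · rw [hf, hf]
    exact (hdisj (e.symm.injective.ne hij)).inter_eq

lemma TilesInto.exists_isTriangle_family {N : ℕ} (h : TilesInto S N p q r) :
    ∃ T : Fin N → Set Plane, (∀ i, IsTriangle p q r (T i)) ∧ S = ⋃ i, T i ∧
      Pairwise fun i j => Disjoint (interior (T i)) (interior (T j)) := by
  obtain ⟨f, Δ, hΔ, hS, hdisj⟩ := h
  exact ⟨fun i => f i '' Δ, fun i => hΔ.image (f i), hS,
    fun i j hij => Set.disjoint_iff_inter_eq_empty.mpr (hdisj i j hij)⟩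

lemma TilesInto.image {N : ℕ} (h : TilesInto S N p q r) (g : Plane ≃ᵢ Plane) :
    TilesInto (g '' S) N p q r := by
  obtain ⟨f, Δ, hΔ, rfl, hdisj⟩ := h
  have himage (i : Fin N) : (f i).trans g '' Δ = g '' (f i '' Δ) := Set.image_comp g (f i) Δ
  refine ⟨fun i => (f i).trans g, Δ, hΔ, ?_, fun i j hij => ?_⟩
  · simp only [himage, Set.image_iUnion]
  · have hint (A : Set Plane) : interior (g '' A) = g '' interior A :=
      (g.toHomeomorph.image_interior A).symm
    rw [himage, himage, hint, hint, ← Set.image_inter g.injective, hdisj i j hij, Set.image_empty]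

lemma TilesInto.congr {N : ℕ} {p' q' r' : ℝ} (h : TilesInto S N p q r)
    (hS : IsTriangle p' q' r' S) (hS' : IsTriangle p' q' r' S') : TilesInto S' N p q r := by
  obtain ⟨g, rfl⟩ := hS.exists_isometryEquiv_image_eq hS'
  exact h.image g

lemma TilesInto.union {N N' : ℕ} (h : TilesInto S N p q r) (h' : TilesInto S' N' p q r)
    (hdisj : Disjoint (interior S) (interior S')) : TilesInto (S ∪ S') (N + N') p q r := by
  have ⟨_, Δ, hΔ, _, _⟩ := h
  obtain ⟨T, hT, rfl, hdT⟩ := h.exists_isTriangle_family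
  obtain ⟨T', hT', rfl, hdT'⟩ := h'.exists_isTriangle_family
  have hcross (i : Fin N) (j : Fin N') : Disjoint (interior (T i)) (interior (T' j)) :=
    hdisj.mono (interior_mono (Set.subset_iUnion T i)) (interior_mono (Set.subset_iUnion T' j))
  have htile := tilesInto_iUnion_of_isTriangle (T := Sum.elim T T') hΔ (Sum.rec hT hT') <| by
    rintro (i | i) (j | j) hij
    · exact hdT (ne_of_apply_ne Sum.inl hij)
    · exact hcross i j
    · exact (hcross j i).symm
    · exact hdT' (ne_of_apply_ne Sum.inr hij)
  simpa [Set.iUnion_sum] using htile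

lemma isTriangle_frameMap_image_cornerTriangle (O u v : Plane) (x y s : ℝ) :
    IsTriangle (|s| * ‖u‖) (|s| * ‖v‖) (|s| * ‖u - v‖)
      (frameMap O u v '' cornerTriangle x y s) := by
  refine ⟨x • u + (y + s) • v + O, (x + s) • u + y • v + O, x • u + y • v + O, ?_, ?_, ?_, ?_⟩
  · rw [dist_eq_norm, ← Real.norm_eq_abs, ← norm_smul]
    congr 1
    module
  · rw [dist_eq_norm, ← Real.norm_eq_abs, ← norm_smul]
    congr 1
    module
  · rw [dist_comm, dist_eq_norm, ← Real.norm_eq_abs, ← norm_smul]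
    congr 1
    module
  · rw [frameMap_image_cornerTriangle, Set.pair_comm, Set.insert_comm, Set.pair_comm]

lemma isTriangle_frameMap_image_gridCell (O u v : Plane) (i j : ℕ) :
    IsTriangle ‖u‖ ‖v‖ ‖u - v‖ (frameMap O u v '' gridCell i j) := by
  rw [gridCell]
  split_ifs
  · simpa using isTriangle_frameMap_image_cornerTriangle O u v j (i - j) 1
  · simpa using isTriangle_frameMap_image_cornerTriangle O u v (i + 1) (j - i) (-1)

lemma tilesInto_frameMap_image_cornerTriangle (O u v : Plane) {k : ℕ} (hk : 0 < k) :
    TilesInto (frameMap O u v '' cornerTriangle 0 0 k) (k ^ 2) ‖u‖ ‖v‖ ‖u - v‖ := by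
  have hcell (i : Fin k × Fin k) := isTriangle_frameMap_image_gridCell O u v i.1 i.2
  have htile := tilesInto_iUnion_of_isTriangle (hcell (⟨0, hk⟩, ⟨0, hk⟩)) hcell fun i j hij =>
    disjoint_interior_image_gridCell (by simp) (frameMap O u v)
      (p := i.1) (q := i.2) (p' := j.1) (q' := j.2) (by simpa [Prod.ext_iff, Fin.ext_iff] using hij)
  rwa [← Set.image_iUnion, ← cornerTriangle_eq_iUnion_gridCell hk, Fintype.card_prod,
    Fintype.card_fin, ← sq] at htile

lemma IsTriangle.tilesInto_sq {k : ℕ} (hk : 0 < k) (h : IsTriangle (k * p) (k * q) (k * r) Δ) :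
    TilesInto Δ (k ^ 2) p q r := by
  obtain ⟨P, Q, R, hQR, hPR, hPQ, rfl⟩ := h
  have hk₀ : (k : ℝ) ≠ 0 := Nat.cast_ne_zero.mpr hk.ne'
  have hnorm {A B : Plane} {d : ℝ} (hAB : dist A B = k * d) : ‖(k : ℝ)⁻¹ • (A - B)‖ = d := by
    rw [norm_smul, ← dist_eq_norm, hAB, norm_inv, RCLike.norm_natCast, inv_mul_cancel_left₀ hk₀]
  have htile := tilesInto_frameMap_image_cornerTriangle R
    ((k : ℝ)⁻¹ • (Q - R)) ((k : ℝ)⁻¹ • (P - R)) hk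
  rw [← smul_sub, sub_sub_sub_cancel_right, hnorm hQR, hnorm hPR, hnorm (dist_comm Q P ▸ hPQ),
    frameMap_image_cornerTriangle] at htile
  rw [Set.pair_comm, Set.insert_comm, Set.pair_comm]
  simpa [hk₀, smul_smul] using htile

end Tilings

section Stewart

lemma exists_mem_segment_of_stewart {V : Type*} [NormedAddCommGroup V] [InnerProductSpace ℝ V]
    {P Q R : V} {x y d : ℝ} (hx : 0 < x) (hy : 0 < y) (hd : 0 ≤ d) (hPQ : dist P Q = x + y)
    (h : dist R P ^ 2 * y + dist R Q ^ 2 * x = (x + y) * (d ^ 2 + x * y)) :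
    ∃ D ∈ segment ℝ P Q, dist P D = x ∧ dist D Q = y ∧ dist R D = d := by
  have hxy : 0 < x + y := add_pos hx hy
  have hl₀ : 0 < x / (x + y) := div_pos hx hxy
  have hl₁ : 1 - x / (x + y) = y / (x + y) := by field_simp; ring
  have hl : x / (x + y) < 1 := sub_pos.mp (hl₁ ▸ div_pos hy hxy)
  set D := AffineMap.lineMap P Q (x / (x + y)) with hD
  have hPD : dist P D = x := by
    rw [hD, dist_left_lineMap, Real.norm_of_nonneg hl₀.le, hPQ, div_mul_cancel₀ _ hxy.ne']
  have hDQ : dist D Q = y := by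
    rw [hD, dist_lineMap_right, hl₁, Real.norm_of_nonneg (by positivity), hPQ,
      div_mul_cancel₀ _ hxy.ne']
  have hsbtw : Sbtw ℝ P D Q :=
    sbtw_lineMap_iff.mpr ⟨dist_pos.mp (hPQ ▸ hxy), hl₀, hl⟩
  have hstewart := EuclideanGeometry.dist_sq_mul_dist_add_dist_sq_mul_dist R P Q D
    hsbtw.angle₁₂₃_eq_pi
  rw [dist_comm Q D, hPD, hDQ, hPQ, h] at hstewart
  have hsq : d ^ 2 = dist R D ^ 2 := add_right_cancel (mul_left_cancel₀ hxy.ne' hstewart)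
  exact ⟨D, mem_segment_iff_wbtw.mpr hsbtw.wbtw, hPD, hDQ,
    ((sq_eq_sq₀ hd dist_nonneg).mp hsq).symm⟩

lemma IsTriangle.exists_union_eq_of_stewart {u v x y d : ℝ} {Δ : Set Plane} (hx : 0 < x)
    (hy : 0 < y) (hd : 0 ≤ d) (hΔ : IsTriangle u v (x + y) Δ)
    (h : v ^ 2 * y + u ^ 2 * x = (x + y) * (d ^ 2 + x * y)) :
    ∃ Δ₁ Δ₂, IsTriangle d x v Δ₁ ∧ IsTriangle d y u Δ₂ ∧ Δ₁ ∪ Δ₂ = Δ ∧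
      Disjoint (interior Δ₁) (interior Δ₂) := by
  obtain ⟨P, Q, R, rfl, rfl, hPQ, rfl⟩ := hΔ
  rw [dist_comm P R, dist_comm Q R] at h
  obtain ⟨D, hD, hPD, hDQ, hRD⟩ := exists_mem_segment_of_stewart hx hy hd hPQ h
  refine ⟨convexHull ℝ {R, P, D}, convexHull ℝ {R, D, Q}, ⟨P, R, D, hRD, hPD, rfl, ?_⟩,
    ⟨Q, R, D, hRD, by rwa [dist_comm], rfl, ?_⟩, ?_, ?_⟩
  · rw [Set.insert_comm]
  · rw [Set.insert_comm Q, Set.pair_comm Q]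
  · rw [convexHull_union_convexHull_of_mem_segment R hD, Set.insert_comm, Set.pair_comm]
  · exact disjoint_interior_convexHull_of_mem_segment (by simp) R hD

end Stewart

theorem stmt19_general {a b c m : ℝ} (ha : 0 < a) (hb : 0 < b) (hm : 0 < m)
    (h : c ^ 2 = a ^ 2 + b ^ 2 + a * b) {k N : ℕ} (hk : (k : ℝ) = (a + 2 * b) * m)
    (htri : ∃ Δ, IsTriangle (a * (a + 2 * b) * m) (b * (b + 2 * a) * m) (c ^ 2 * m) Δ ∧
      TilesInto Δ N a b c) {Δ : Set Plane}
    (hΔ : IsTriangle (c ^ 2 * m) ((a + 2 * b) * c * m) (3 * (a + b) * b * m) Δ) :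
    TilesInto Δ (k ^ 2 + N) a b c := by
  obtain ⟨Δ₀, hΔ₀, htile⟩ := htri
  have hk₀ : (0 : ℝ) < k := hk ▸ by positivity
  have hbase : 3 * (a + b) * b * m = k * b + b * (b + 2 * a) * m := by rw [hk]; ring
  have hleg : (a + 2 * b) * c * m = k * c := by rw [hk]; ring
  have hcevian : a * (a + 2 * b) * m = k * a := by rw [hk]; ring
  rw [hbase, hleg] at hΔ
  rw [hcevian] at hΔ₀
  have hstewart : (k * c) ^ 2 * (b * (b + 2 * a) * m) + (c ^ 2 * m) ^ 2 * (k * b) =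
      (k * b + b * (b + 2 * a) * m) * ((k * a) ^ 2 + k * b * (b * (b + 2 * a) * m)) := by
    rw [hk]
    linear_combination b * m ^ 3 * (a + 2 * b) *
      ((a + 2 * b) * (b + 2 * a) + c ^ 2 + a ^ 2 + b ^ 2 + a * b) * h
  obtain ⟨Δ₁, Δ₂, hΔ₁, hΔ₂, rfl, hdisj⟩ := hΔ.exists_union_eq_of_stewart (mul_pos hk₀ hb)
    (by positivity) (by positivity) hstewart
  exact (hΔ₁.tilesInto_sq (Nat.cast_pos.mp hk₀)).union (htile.congr hΔ₀ hΔ₂) hdisj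

theorem stmt19 (a b c : ℕ) (ha : 0 < a) (hb : 0 < b) (hc : 0 < c)
    (hab : Nat.Coprime a b) (hac : Nat.Coprime a c) (hbc : Nat.Coprime b c)
    (h : c ^ 2 = a ^ 2 + b ^ 2 + a * b) (m : ℕ) (hm : 0 < m)
    (htri : ∃ Δ : Set Plane,
      IsTriangle ((a : ℝ) * (a + 2 * b) * m) ((b : ℝ) * (b + 2 * a) * m)
        ((c : ℝ) ^ 2 * m) Δ ∧
      TilesInto Δ ((a + 2 * b) * (b + 2 * a) * m ^ 2) a b c) :
    ∀ Δ : Set Plane,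
      IsTriangle ((c : ℝ) ^ 2 * m) (((a : ℝ) + 2 * b) * c * m)
        (3 * ((a : ℝ) + b) * b * m) Δ →
      TilesInto Δ (3 * m ^ 2 * (a + 2 * b) * (a + b)) a b c := by
  intro Δ hΔ
  have hcount : 3 * m ^ 2 * (a + 2 * b) * (a + b) =
      ((a + 2 * b) * m) ^ 2 + (a + 2 * b) * (b + 2 * a) * m ^ 2 := by ring
  rw [hcount]
  exact stmt19_general (mod_cast ha) (mod_cast hb) (mod_cast hm) (mod_cast h) (by push_cast; rfl)
    htri hΔ
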